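/- For all integers n ≥ 0 and k ≥ 1, the Daehee polynomial of the second kind of order k satisfies (−1)^n D̂_n^(k)(x) = B_n^{(n+k+1)}(x+k+1) as an identity of polynomials in x over ℚ, where B_n^{(α)}(x) denotes the n-th Bernoulli polynomial of order α. -/

import Mathlib

/-! The substitution `t = 1 - e^u` relates the two generating functions. Instead of formal residues,
the proof differentiates in `x`, which lowers everything to one factorization.

* In `∑ tⁿ (-1)ⁿ binom(x,n) = (1-t)^x`, the operator `∂/∂x` is multiplication by `log(1-t)`
  (`xDeriv_oneSubTX`), so the coefficients of `(-log(1-t))^k (1-t)^x` are, up to sign, the `k`-th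
  derivatives of binomial polynomials. The factor `(1-t)^k` is the shift `x ↦ x + k`
  (`one_sub_pow_mul_oneSubTX`).
* In `H_α = (t/(e^t-1))^α e^{xt}`, the operator `∂/∂x` is multiplication by `t`, so the coefficient
  of `tⁿ` in `H_{n+k+1}` is the `k`-th derivative of the coefficient of `t^{n+k}`.
* That last coefficient is `binom(x-1, n+k)` (`coeff_bernSeries`): a first-order differential
  equation in `t` relates `H_N` and `H_{N+1}`, and comparing the coefficients of `t^N` gives
  `N [t^N] H_{N+1} = (x - N) [t^{N-1}] H_N`.
-/

open PowerSeries Polynomial Finset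

/-- `log(1+t) = Σ_{n≥1} (-1)^{n+1} t^n / n` as a formal power series over ℚ. -/
noncomputable def logOneAdd : PowerSeries ℚ :=
  PowerSeries.mk fun n => if n = 0 then 0 else (-1) ^ (n + 1) / (n : ℚ)

/-- `−log(1−t) = Σ_{n≥1} t^n / n` as a formal power series over ℚ. -/
noncomputable def negLogOneSub : PowerSeries ℚ :=
  PowerSeries.mk fun n => if n = 0 then 0 else 1 / (n : ℚ)

/-- `e^t = Σ_{n≥0} t^n / n!` as a formal power series over ℚ. -/
noncomputable def expQ : PowerSeries ℚ :=
  PowerSeries.mk fun n => 1 / (n.factorial : ℚ)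

/-- `log(1+t)` as a formal power series with coefficients in ℚ[x]. -/
noncomputable def logOneAddP : PowerSeries (Polynomial ℚ) :=
  PowerSeries.mk fun n => Polynomial.C (if n = 0 then 0 else (-1) ^ (n + 1) / (n : ℚ))

/-- `−log(1−t)` as a formal power series with coefficients in ℚ[x]. -/
noncomputable def negLogOneSubP : PowerSeries (Polynomial ℚ) :=
  PowerSeries.mk fun n => Polynomial.C (if n = 0 then 0 else 1 / (n : ℚ))

/-- `e^t` as a formal power series with coefficients in ℚ[x]. -/
noncomputable def expP : PowerSeries (Polynomial ℚ) :=
  PowerSeries.mk fun n => Polynomial.C (1 / (n.factorial : ℚ))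

/-- `e^{xt} = Σ_{n≥0} x^n t^n / n!` as a formal power series with coefficients in ℚ[x]. -/
noncomputable def expXT : PowerSeries (Polynomial ℚ) :=
  PowerSeries.mk fun n => Polynomial.C (1 / (n.factorial : ℚ)) * Polynomial.X ^ n

/-- The binomial polynomial `x(x−1)⋯(x−n+1)/n! ∈ ℚ[x]`. -/
noncomputable def binomPoly (n : ℕ) : Polynomial ℚ :=
  Polynomial.C (1 / (n.factorial : ℚ)) *
    ∏ i ∈ Finset.range n, (Polynomial.X - Polynomial.C (i : ℚ))

/-- `(1+t)^x = Σ_{n≥0} C(x,n) t^n` as a formal power series with coefficients in ℚ[x]. -/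
noncomputable def onePlusTX : PowerSeries (Polynomial ℚ) :=
  PowerSeries.mk binomPoly

/-- `(1−t)^x = Σ_{n≥0} (−1)^n C(x,n) t^n` as a formal power series with coefficients in ℚ[x]. -/
noncomputable def oneSubTX : PowerSeries (Polynomial ℚ) :=
  PowerSeries.mk fun n => (-1) ^ n * binomPoly n

/-- Coefficientwise differentiation `∂/∂x` on `ℚ[x]⟦t⟧`. -/
noncomputable def xDeriv (f : PowerSeries (Polynomial ℚ)) : PowerSeries (Polynomial ℚ) :=
  PowerSeries.mk fun n => Polynomial.derivative (PowerSeries.coeff n f)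

lemma derivative_mul_series {R : Type*} [CommRing R] (f g : PowerSeries R) :
    PowerSeries.derivative R (f * g)
      = f * PowerSeries.derivative R g + g * PowerSeries.derivative R f := by
  rw [Derivation.leibniz, smul_eq_mul, smul_eq_mul]

lemma coeff_xDeriv (f : PowerSeries (Polynomial ℚ)) (n : ℕ) :
    PowerSeries.coeff n (xDeriv f) = Polynomial.derivative (PowerSeries.coeff n f) := by
  simp [xDeriv]

/-- Series with coefficients in `ℚ` are constants for `∂/∂x`. -/
lemma xDeriv_map_mul (a : PowerSeries ℚ) (f : PowerSeries (Polynomial ℚ)) :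
    xDeriv (PowerSeries.map Polynomial.C a * f)
      = PowerSeries.map Polynomial.C a * xDeriv f := by
  ext1 n
  simp [coeff_xDeriv, PowerSeries.coeff_mul]

/-- If `∂/∂x` acts on `f` as multiplication by a series `a` over `ℚ`, then multiplying `f` by
`a ^ k` differentiates its coefficients `k` times. -/
lemma coeff_pow_mul_of_xDeriv (a : PowerSeries ℚ) (f : PowerSeries (Polynomial ℚ))
    (hf : xDeriv f = PowerSeries.map Polynomial.C a * f) (k n : ℕ) :
    PowerSeries.coeff n (PowerSeries.map Polynomial.C a ^ k * f)
      = Polynomial.derivative^[k] (PowerSeries.coeff n f) := by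
  induction k with
  | zero => simp
  | succ k ih =>
    rw [Function.iterate_succ_apply', ← ih, ← coeff_xDeriv, ← map_pow _ a k, xDeriv_map_mul, hf,
      map_pow, pow_succ, mul_assoc]

/-- A solution of `(1 - t) f' = a f` is determined by its constant term. -/
lemma ode_unique (a : Polynomial ℚ) (f g : PowerSeries (Polynomial ℚ))
    (hf : (1 - PowerSeries.X) * PowerSeries.derivative (Polynomial ℚ) f = PowerSeries.C a * f)
    (hg : (1 - PowerSeries.X) * PowerSeries.derivative (Polynomial ℚ) g = PowerSeries.C a * g)
    (h0 : PowerSeries.coeff 0 f = PowerSeries.coeff 0 g) : f = g := by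
  have key : ∀ f : PowerSeries (Polynomial ℚ),
      (1 - PowerSeries.X) * PowerSeries.derivative (Polynomial ℚ) f = PowerSeries.C a * f →
      ∀ n : ℕ, PowerSeries.coeff (n + 1) f * ((n : Polynomial ℚ) + 1)
        = (a + n) * PowerSeries.coeff n f := by
    intro f hf n
    have h := congrArg (PowerSeries.coeff n) hf
    rw [PowerSeries.coeff_C_mul, sub_mul, one_mul, map_sub, PowerSeries.coeff_derivative] at h
    cases n with
    | zero =>
      rw [PowerSeries.coeff_zero_X_mul] at h
      linear_combination h
    | succ n =>
      rw [PowerSeries.coeff_succ_X_mul, PowerSeries.coeff_derivative] at h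
      push_cast at h ⊢
      linear_combination h
  ext1 n
  induction n with
  | zero => exact h0
  | succ n ih =>
    have hn : (n : Polynomial ℚ) + 1 ≠ 0 := by exact_mod_cast Nat.succ_ne_zero n
    apply mul_right_cancel₀ hn
    rw [key f hf, key g hg, ih]

lemma C_inv_factorial_succ (n : ℕ) :
    Polynomial.C (1 / ((n + 1).factorial : ℚ)) * ((n : Polynomial ℚ) + 1)
      = Polynomial.C (1 / (n.factorial : ℚ)) := by
  have h : ((n : Polynomial ℚ) + 1) = Polynomial.C ((n : ℚ) + 1) := by simp
  rw [h, ← Polynomial.C_mul, Nat.factorial_succ]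
  congr 1
  push_cast
  field_simp

lemma binomPoly_succ (n : ℕ) :
    binomPoly (n + 1) * ((n : Polynomial ℚ) + 1)
      = (Polynomial.X - (n : Polynomial ℚ)) * binomPoly n := by
  have h := C_inv_factorial_succ n
  have hC : Polynomial.C (n : ℚ) = (n : Polynomial ℚ) := by simp
  unfold binomPoly
  rw [Finset.prod_range_succ, ← h, hC]
  ring

/-- The differential equation `(1 - t) ∂/∂t (1 - t)^x = -x (1 - t)^x`. -/
lemma oneSubTX_ode :
    (1 - PowerSeries.X) * PowerSeries.derivative (Polynomial ℚ) oneSubTX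
      = PowerSeries.C (-Polynomial.X) * oneSubTX := by
  ext1 n
  rw [PowerSeries.coeff_C_mul, sub_mul, one_mul, map_sub, PowerSeries.coeff_derivative]
  cases n with
  | zero =>
    have h := binomPoly_succ 0
    simp only [PowerSeries.coeff_zero_X_mul, oneSubTX, PowerSeries.coeff_mk]
    push_cast at h ⊢
    linear_combination -h
  | succ n =>
    have h := binomPoly_succ (n + 1)
    simp only [PowerSeries.coeff_succ_X_mul, PowerSeries.coeff_derivative, oneSubTX,
      PowerSeries.coeff_mk]
    push_cast at h ⊢
    linear_combination (-1) ^ (n + 2) * h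

lemma negLogOneSubP_eq_map : negLogOneSubP = PowerSeries.map Polynomial.C negLogOneSub := by
  ext1 n
  simp [negLogOneSubP, negLogOneSub]

lemma negLogOneSubP_ode :
    (1 - PowerSeries.X) * PowerSeries.derivative (Polynomial ℚ) negLogOneSubP = 1 := by
  have h : PowerSeries.derivative (Polynomial ℚ) negLogOneSubP = PowerSeries.mk 1 := by
    ext1 n
    have hn : ((n : Polynomial ℚ) + 1) = Polynomial.C ((n : ℚ) + 1) := by simp
    have hn' : (n : ℚ) + 1 ≠ 0 := by positivity
    rw [PowerSeries.coeff_derivative, negLogOneSubP, PowerSeries.coeff_mk, hn, ← Polynomial.C_mul]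
    simp [hn']
  rw [h, mul_comm]
  exact PowerSeries.mk_one_mul_one_sub_eq_one _

lemma xDeriv_derivative (f : PowerSeries (Polynomial ℚ)) :
    PowerSeries.derivative (Polynomial ℚ) (xDeriv f)
      = xDeriv (PowerSeries.derivative (Polynomial ℚ) f) := by
  ext1 n
  simp [coeff_xDeriv, PowerSeries.coeff_derivative]

lemma xDeriv_C_neg_X_mul (f : PowerSeries (Polynomial ℚ)) :
    xDeriv (PowerSeries.C (-Polynomial.X) * f)
      = -f + PowerSeries.C (-Polynomial.X) * xDeriv f := by
  ext1 n
  simp [coeff_xDeriv, PowerSeries.coeff_C_mul]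
  ring

lemma coeff_zero_oneSubTX : PowerSeries.coeff 0 oneSubTX = 1 := by
  simp [oneSubTX, binomPoly]

/-- `∂/∂x (1 - t)^x = log(1 - t) (1 - t)^x`: the difference of the two sides solves the equation
`(1 - t) f' = -x f` and has constant term zero. -/
lemma xDeriv_oneSubTX :
    xDeriv oneSubTX = PowerSeries.map Polynomial.C (-negLogOneSub) * oneSubTX := by
  rw [map_neg, ← negLogOneSubP_eq_map]
  have h1 := congrArg xDeriv oneSubTX_ode
  have hm : (1 - PowerSeries.X : PowerSeries (Polynomial ℚ))
      = PowerSeries.map Polynomial.C (1 - PowerSeries.X) := by simp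
  rw [xDeriv_C_neg_X_mul, hm, xDeriv_map_mul, ← hm, ← xDeriv_derivative] at h1
  have h2 := negLogOneSubP_ode
  have h3 := oneSubTX_ode
  have h : xDeriv oneSubTX + negLogOneSubP * oneSubTX = 0 := by
    apply ode_unique (-Polynomial.X)
    · rw [map_add, derivative_mul_series]
      linear_combination h1 + oneSubTX * h2 + negLogOneSubP * h3
    · simp
    · rw [map_add, coeff_xDeriv, coeff_zero_oneSubTX, PowerSeries.coeff_mul]
      simp [negLogOneSubP]
  linear_combination h

/-- `(1 - t)^k (1 - t)^x = (1 - t)^(x + k)`. -/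
lemma one_sub_pow_mul_oneSubTX (k : ℕ) :
    (1 - PowerSeries.X) ^ k * oneSubTX
      = PowerSeries.map (Polynomial.compRingHom (Polynomial.X + Polynomial.C (k : ℚ)))
          oneSubTX := by
  apply ode_unique (-(Polynomial.X + Polynomial.C (k : ℚ)))
  · have h := oneSubTX_ode
    have hp : (1 - PowerSeries.X) * PowerSeries.derivative (Polynomial ℚ)
        ((1 - PowerSeries.X : PowerSeries (Polynomial ℚ)) ^ k)
        = -(k : PowerSeries (Polynomial ℚ)) * (1 - PowerSeries.X) ^ k := by
      cases k with
      | zero => simp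
      | succ k =>
        rw [PowerSeries.derivative_pow, map_sub]
        simp
        ring
    have hC : PowerSeries.C (-(Polynomial.X + Polynomial.C (k : ℚ)))
        = PowerSeries.C (-Polynomial.X) - (k : PowerSeries (Polynomial ℚ)) := by
      simp
      ring
    rw [derivative_mul_series, hC]
    linear_combination (1 - PowerSeries.X) ^ k * h + oneSubTX * hp
  · have h := congrArg (PowerSeries.map
      (Polynomial.compRingHom (Polynomial.X + Polynomial.C (k : ℚ)))) oneSubTX_ode
    have hd : ∀ (φ : Polynomial ℚ →+* Polynomial ℚ) (f : PowerSeries (Polynomial ℚ)),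
        PowerSeries.map φ (PowerSeries.derivative (Polynomial ℚ) f)
          = PowerSeries.derivative (Polynomial ℚ) (PowerSeries.map φ f) := by
      intro φ f
      ext1 n
      simp [PowerSeries.coeff_derivative]
    rw [map_mul, map_mul, hd] at h
    simpa using h
  · simp [PowerSeries.coeff_mul, oneSubTX, binomPoly]

/-- The series `t/(e^t - 1)` over `ℚ`. -/
noncomputable def bernBase : PowerSeries ℚ :=
  (PowerSeries.mk fun n => 1 / ((n + 1).factorial : ℚ))⁻¹

/-- The generating function `(t/(e^t - 1))^α e^{xt}` of the Bernoulli polynomials of order `α`. -/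
noncomputable def bernSeries (α : ℕ) : PowerSeries (Polynomial ℚ) :=
  PowerSeries.map Polynomial.C bernBase ^ α * expXT

lemma expP_sub_one_mul :
    (expP - 1) * PowerSeries.map Polynomial.C bernBase = PowerSeries.X := by
  have h : expP - 1 = PowerSeries.X
      * PowerSeries.map Polynomial.C (PowerSeries.mk fun n => 1 / ((n + 1).factorial : ℚ)) := by
    ext1 n
    cases n with
    | zero => simp [expP]
    | succ n => simp [expP, PowerSeries.coeff_succ_X_mul, PowerSeries.coeff_one]
  rw [h, mul_assoc, ← map_mul, bernBase, PowerSeries.mul_inv_cancel _ (by simp), map_one, mul_one]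

lemma derivative_expP : PowerSeries.derivative (Polynomial ℚ) expP = expP := by
  ext1 n
  rw [PowerSeries.coeff_derivative]
  simpa [expP] using C_inv_factorial_succ n

lemma derivative_expXT :
    PowerSeries.derivative (Polynomial ℚ) expXT = PowerSeries.C Polynomial.X * expXT := by
  ext1 n
  rw [PowerSeries.coeff_derivative, PowerSeries.coeff_C_mul]
  simp only [expXT, PowerSeries.coeff_mk]
  linear_combination Polynomial.X ^ (n + 1) * C_inv_factorial_succ n

lemma xDeriv_expXT : xDeriv expXT = PowerSeries.X * expXT := by
  ext1 n
  rw [coeff_xDeriv]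
  cases n with
  | zero => simp [expXT]
  | succ n =>
    rw [PowerSeries.coeff_succ_X_mul]
    simp only [expXT, PowerSeries.coeff_mk, Polynomial.derivative_C_mul,
      Polynomial.derivative_X_pow]
    have h := C_inv_factorial_succ n
    simp only [Nat.add_sub_cancel, Polynomial.C_eq_natCast]
    push_cast at h ⊢
    linear_combination Polynomial.X ^ n * h

/-- With `N = m + 1`, the relation `N H_{N+1} = N H_N - t H_N' + (x - N) t H_N` for
`H_N = (t/(e^t - 1))^N e^{xt}`. -/
lemma bernSeries_ode (m : ℕ) :
    ((m : PowerSeries (Polynomial ℚ)) + 1) * bernSeries (m + 2)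
      = ((m : PowerSeries (Polynomial ℚ)) + 1) * bernSeries (m + 1)
        - PowerSeries.X * PowerSeries.derivative (Polynomial ℚ) (bernSeries (m + 1))
        + PowerSeries.X * (PowerSeries.C (Polynomial.X - ((m : Polynomial ℚ) + 1))
            * bernSeries (m + 1)) := by
  have hG := expP_sub_one_mul
  unfold bernSeries
  generalize PowerSeries.map Polynomial.C bernBase = G at *
  have hG' := congrArg (PowerSeries.derivative (Polynomial ℚ)) hG
  rw [derivative_mul_series, map_sub, derivative_expP, PowerSeries.derivative_X,
    PowerSeries.derivative_one, sub_zero] at hG'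
  have hX : PowerSeries.X * PowerSeries.derivative (Polynomial ℚ) G
      = G - PowerSeries.X * G - G ^ 2 := by
    linear_combination G * hG' - (PowerSeries.derivative (Polynomial ℚ) G + G) * hG
  rw [derivative_mul_series, PowerSeries.derivative_pow, derivative_expXT]
  simp only [map_sub, map_add, map_one, map_natCast,
    Nat.add_sub_cancel]
  push_cast
  linear_combination (((m : PowerSeries (Polynomial ℚ)) + 1) * G ^ m * expXT) * hX

/-- `[t^m] (t/(e^t - 1))^(m+1) e^{xt} = binom(x - 1, m)`. -/
lemma coeff_bernSeries (m : ℕ) :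
    PowerSeries.coeff m (bernSeries (m + 1)) = (binomPoly m).comp (Polynomial.X - 1) := by
  induction m with
  | zero =>
    simp [bernSeries, PowerSeries.coeff_mul, expXT, binomPoly, bernBase]
  | succ m ih =>
    have h := congrArg (PowerSeries.coeff (m + 1)) (bernSeries_ode m)
    have hc : ((m : PowerSeries (Polynomial ℚ)) + 1) = PowerSeries.C ((m : Polynomial ℚ) + 1) := by
      simp
    rw [map_add, map_sub, hc, PowerSeries.coeff_C_mul, PowerSeries.coeff_C_mul,
      PowerSeries.coeff_succ_X_mul, PowerSeries.coeff_succ_X_mul, PowerSeries.coeff_derivative,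
      PowerSeries.coeff_C_mul, ih] at h
    have hb := congrArg (fun p => Polynomial.comp p (Polynomial.X - 1)) (binomPoly_succ m)
    simp only [Polynomial.mul_comp, Polynomial.add_comp, Polynomial.sub_comp, Polynomial.X_comp,
      Polynomial.natCast_comp, Polynomial.one_comp] at hb
    have hm : (m : Polynomial ℚ) + 1 ≠ 0 := by exact_mod_cast Nat.succ_ne_zero m
    apply mul_left_cancel₀ hm
    linear_combination h - hb

/-- `[tⁿ] (t/(e^t - 1))^(n+k+1) e^{xt}` is the `k`-th derivative of `binom(x - 1, n + k)`. -/
lemma coeff_bernSeries_add (n k : ℕ) :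
    PowerSeries.coeff n (bernSeries (n + k + 1))
      = (Polynomial.derivative^[k] (binomPoly (n + k))).comp (Polynomial.X - 1) := by
  have hX : PowerSeries.map Polynomial.C (PowerSeries.X : PowerSeries ℚ) = PowerSeries.X := by
    simp
  have hd : xDeriv (bernSeries (n + k + 1))
      = PowerSeries.map Polynomial.C PowerSeries.X * bernSeries (n + k + 1) := by
    rw [bernSeries, ← map_pow, xDeriv_map_mul, xDeriv_expXT, hX]
    ring
  have h := coeff_pow_mul_of_xDeriv _ _ hd k (n + k)
  rw [hX, PowerSeries.coeff_X_pow_mul, coeff_bernSeries] at h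
  rw [h]
  have hs : ∀ (p : Polynomial ℚ) (j : ℕ), Polynomial.derivative^[j] (p.comp (Polynomial.X - 1))
      = (Polynomial.derivative^[j] p).comp (Polynomial.X - 1) := by
    intro p j
    induction j with
    | zero => rfl
    | succ j ih =>
      rw [Function.iterate_succ_apply', Function.iterate_succ_apply', ih,
        Polynomial.derivative_comp]
      simp
  exact hs _ k

/-- For `n ≥ 0`, `k ≥ 1`, the Daehee polynomials of the second kind of
order `k` satisfy `(−1)^n D̂_n^(k)(x) = B_n^{(n+k+1)}(x+k+1)` in `ℚ[x]`, where
`B_n^{(α)}(x)` are the Bernoulli polynomials of order `α`. -/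
theorem neg_pow_daehee_second_kind_poly_eq_bernoulli_order_poly_shift
    (k : ℕ) (hk : 1 ≤ k) (n : ℕ)
    (Dh : ℕ → Polynomial ℚ)
    (hDh : ((1 - PowerSeries.X) * negLogOneSubP) ^ k * oneSubTX
      = PowerSeries.X ^ k
          * PowerSeries.mk (fun m => Polynomial.C ((m.factorial : ℚ)⁻¹) * Dh m))
    (B : ℕ → ℕ → Polynomial ℚ)
    (hB : ∀ α : ℕ, 1 ≤ α →
      (PowerSeries.X : PowerSeries (Polynomial ℚ)) ^ α * expXT
        = (expP - 1) ^ α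
            * PowerSeries.mk (fun m => Polynomial.C ((m.factorial : ℚ)⁻¹) * B α m)) :
    (-1 : Polynomial ℚ) ^ n * Dh n
      = (B (n + k + 1) n).comp (Polynomial.X + Polynomial.C ((k : ℚ) + 1)) := by
  have hn0 : (n.factorial : ℚ) ≠ 0 := by exact_mod_cast n.factorial_ne_zero
  set D := Polynomial.derivative^[k] (binomPoly (n + k)) with hD
  -- The Bernoulli side: cancel `(e^t - 1)^α` after multiplying by `(t/(e^t - 1))^α`.
  have hBn : Polynomial.C ((n.factorial : ℚ)⁻¹) * B (n + k + 1) n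
      = D.comp (Polynomial.X - 1) := by
    have h := hB (n + k + 1) (by omega)
    have hG : (expP - 1) ^ (n + k + 1) * PowerSeries.map Polynomial.C bernBase ^ (n + k + 1)
        = PowerSeries.X ^ (n + k + 1) := by rw [← mul_pow, expP_sub_one_mul]
    have hX : (PowerSeries.X : PowerSeries (Polynomial ℚ)) ^ (n + k + 1) ≠ 0 :=
      pow_ne_zero _ PowerSeries.X_ne_zero
    have hb : bernSeries (n + k + 1) = PowerSeries.mk
        (fun m => Polynomial.C ((m.factorial : ℚ)⁻¹) * B (n + k + 1) m) := by
      apply mul_left_cancel₀ hX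
      rw [bernSeries]
      linear_combination PowerSeries.map Polynomial.C bernBase ^ (n + k + 1) * h
        + PowerSeries.mk (fun m => Polynomial.C ((m.factorial : ℚ)⁻¹) * B (n + k + 1) m) * hG
    rw [hD, ← coeff_bernSeries_add, hb, PowerSeries.coeff_mk]
  have hDn : Polynomial.C ((n.factorial : ℚ)⁻¹) * Dh n
      = (-1) ^ n * D.comp (Polynomial.X + Polynomial.C (k : ℚ)) := by
    have h := congrArg (PowerSeries.coeff (n + k)) hDh
    rw [PowerSeries.coeff_X_pow_mul, PowerSeries.coeff_mk] at h
    have hL := coeff_pow_mul_of_xDeriv _ _ xDeriv_oneSubTX k (n + k)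
    have hF : ((1 - PowerSeries.X) * negLogOneSubP) ^ k * oneSubTX
        = (-1) ^ k * PowerSeries.map
            (Polynomial.compRingHom (Polynomial.X + Polynomial.C (k : ℚ)))
            (PowerSeries.map Polynomial.C (-negLogOneSub) ^ k * oneSubTX) := by
      have hmap : PowerSeries.map
          (Polynomial.compRingHom (Polynomial.X + Polynomial.C (k : ℚ))) negLogOneSubP
          = negLogOneSubP := by
        ext1 m
        simp [negLogOneSubP]
      rw [map_mul, ← one_sub_pow_mul_oneSubTX, map_pow, map_neg, ← negLogOneSubP_eq_map, map_neg,
        hmap, neg_pow negLogOneSubP, mul_pow]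
      have h1 : ((-1 : PowerSeries (Polynomial ℚ)) ^ k) * (-1) ^ k = 1 := by
        rw [← mul_pow]; simp
      linear_combination -((1 - PowerSeries.X) ^ k * negLogOneSubP ^ k * oneSubTX) * h1
    have hs : ((-1 : PowerSeries (Polynomial ℚ)) ^ k) = PowerSeries.C ((-1) ^ k) := by simp
    have hc : PowerSeries.coeff (n + k) oneSubTX
        = Polynomial.C ((-1) ^ (n + k)) * binomPoly (n + k) := by
      simp [oneSubTX]
    rw [← h, hF, hs, PowerSeries.coeff_C_mul, PowerSeries.coeff_map, hL, hc,
      Polynomial.iterate_derivative_C_mul, Polynomial.coe_compRingHom_apply,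
      Polynomial.mul_comp, Polynomial.C_comp, ← hD]
    have h1 : ((-1 : Polynomial ℚ) ^ k) * (-1) ^ k = 1 := by
      rw [← mul_pow]; simp
    have hCs : Polynomial.C ((-1 : ℚ) ^ (n + k)) = (-1) ^ n * (-1) ^ k := by simp [pow_add]
    rw [hCs]
    linear_combination ((-1) ^ n * D.comp (Polynomial.X + Polynomial.C (k : ℚ))) * h1
  have hcomp := congrArg
    (fun p => Polynomial.comp p (Polynomial.X + Polynomial.C ((k : ℚ) + 1))) hBn
  simp only [Polynomial.mul_comp, Polynomial.C_comp, Polynomial.comp_assoc, Polynomial.sub_comp,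
    Polynomial.X_comp, Polynomial.one_comp] at hcomp
  have hshift : (Polynomial.X + Polynomial.C ((k : ℚ) + 1) - 1 : Polynomial ℚ)
      = Polynomial.X + Polynomial.C (k : ℚ) := by
    simp
    ring
  rw [hshift] at hcomp
  have hC0 : Polynomial.C ((n.factorial : ℚ)⁻¹) ≠ 0 := by simpa using hn0
  apply mul_left_cancel₀ hC0
  rw [hcomp]
  have h1 : ((-1 : Polynomial ℚ) ^ n) * (-1) ^ n = 1 := by
    rw [← mul_pow]; simp
  linear_combination (-1) ^ n * hDn + D.comp (Polynomial.X + Polynomial.C (k : ℚ)) * h1
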